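/- For all m ∈ ℕ, ε with 0 < ε ≤ 1, and q ≥ 1/2, there exists γ₀ > 0 such that for all 0 < γ ≤ γ₀ there exists d₀ such that the following holds for all d ≥ d₀. Let G be an n-vertex graph with maximum degree Δ(G) ≤ d containing a vertex set V ⊆ V(G) with (1 − γ)qn ≤ |V| ≤ (1 + γ)qn and (1 − γ)qd ≤ d_G(v, V) ≤ (1 + γ)qd for each vertex v of G. Let t = ⌈(1 − ε)qn/m⌉. Then the induced subgraph G[V] contains pairwise vertex-disjoint paths P₁, …, P_t, each of length m − 1 (i.e. with m vertices), such that every vertex of G has at most 4d/m neighbours in G among the endvertices of P₁, …, P_t. -/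

import Mathlib

open SimpleGraph

/-- `w` is an internal vertex of the walk `p` (on its support but not an endvertex). -/
def SimpleGraph.Walk.IsInternalVertex {β : Type*} {G : SimpleGraph β} {x y : β}
    (p : G.Walk x y) (w : β) : Prop :=
  w ∈ p.support ∧ w ≠ x ∧ w ≠ y

/-- `F.IsSubdivisionP G lenOK` says that `G` is a subdivision of `F` in which the length of
each subdivision-path satisfies the predicate `lenOK`: there is an injection `f` of the
vertices of `F` into the vertices of `G` and, for each edge `uv` of `F`, a path of positive
length in `G` from `f u` to `f v`, these paths being pairwise internally vertex-disjoint with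
all internal vertices outside the range of `f`, such that every vertex of `G` is in the range
of `f` or on one of the paths, and every edge of `G` is an edge of one of the paths. -/
def SimpleGraph.IsSubdivisionP {α β : Type*} (F : SimpleGraph α) (G : SimpleGraph β)
    (lenOK : ℕ → Prop) : Prop :=
  ∃ (f : α → β) (P : ∀ u v : α, F.Adj u v → G.Walk (f u) (f v)),
    Function.Injective f ∧
    (∀ u v (h : F.Adj u v), (P u v h).IsPath) ∧
    (∀ u v (h : F.Adj u v), 0 < (P u v h).length ∧ lenOK (P u v h).length) ∧
    (∀ u v (h : F.Adj u v), P v u h.symm = (P u v h).reverse) ∧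
    (∀ u v (h : F.Adj u v) (w : β), (P u v h).IsInternalVertex w → w ∉ Set.range f) ∧
    (∀ u v u' v' (h : F.Adj u v) (h' : F.Adj u' v'), s(u, v) ≠ s(u', v') →
      ∀ w : β, (P u v h).IsInternalVertex w → ¬ (P u' v' h').IsInternalVertex w) ∧
    (∀ w : β, w ∈ Set.range f ∨ ∃ u v, ∃ h : F.Adj u v, w ∈ (P u v h).support) ∧
    (∀ x y : β, G.Adj x y → ∃ u v, ∃ h : F.Adj u v, s(x, y) ∈ (P u v h).edges)

/-- `G` is a subdivision of `F`. -/
def SimpleGraph.IsSubdivision {α β : Type*} (F : SimpleGraph α) (G : SimpleGraph β) : Prop :=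
  F.IsSubdivisionP G fun _ => True

/-!
Colour the vertices of `V` independently and uniformly with `m` colours. By Hoeffding's inequality
a vertex fails to see about `q d / m` vertices of each colour with probability exponentially small
in `d`, so some colouring has at most `o(n / d)` exceptional vertices, which lie on only `o(n)`
edges altogether. Counting edges between consecutive colour classes in two ways then shows that
Hall's condition from each class to the next fails by at most `o(n)`, so concatenating nearly
perfect matchings gives vertex-disjoint paths running through all `m` classes. All endvertices lie
in the first and last class, hence an unexceptional vertex sees about `2 q d / m` of them at most,
while paths ending next to an exceptional vertex are few and can be discarded.
-/

section RandomColoring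

open Finset MeasureTheory ProbabilityTheory

theorem measureReal_pi_le_card_filter_sub_le {α κ : Type*} [Fintype α] [MeasurableSpace κ]
    (ν : Measure κ) [IsProbabilityMeasure ν] {A : Set κ} [DecidablePred (· ∈ A)]
    (hA : MeasurableSet A) (N : Finset α) {t : ℝ} (ht : 0 ≤ t) :
    (Measure.pi fun _ : α ↦ ν).real {c | t ≤ #{u ∈ N | c u ∈ A} - #N * ν.real A} ≤
      Real.exp (-(2 * t ^ 2) / #N) := by
  set μ := Measure.pi fun _ : α ↦ ν
  let X : α → (α → κ) → ℝ := fun u c ↦ A.indicator 1 (c u)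
  have mean_X (u : α) : μ[X u] = ν.real A := by
    have hpre := (measurePreserving_eval (fun _ : α ↦ ν) u).measureReal_preimage
      hA.nullMeasurableSet
    exact (integral_indicator_one (measurable_pi_apply u hA)).trans hpre
  have subgaussian_X (u : α) : HasSubgaussianMGF (fun c ↦ X u c - ν.real A) (1 / 4) μ := by
    have hX : AEMeasurable (X u) μ :=
      ((measurable_one.indicator hA).comp (measurable_pi_apply u)).aemeasurable
    have h := hasSubgaussianMGF_of_mem_Icc hX (a := 0) (b := 1) (ae_of_all _ fun c ↦
      ⟨Set.indicator_nonneg (by simp) _, Set.indicator_le_self' (by simp) _⟩)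
    rw [mean_X] at h
    convert h using 1
    norm_num
  have indep_X : iIndepFun (fun u c ↦ X u c - ν.real A) μ :=
    iIndepFun_pi fun _ ↦ ((measurable_one.indicator hA).sub_const _).aemeasurable
  have hoeffding := HasSubgaussianMGF.measure_sum_ge_le_of_iIndepFun indep_X (s := N)
    (fun u _ ↦ subgaussian_X u) ht
  have sum_X (c : α → κ) :
      ∑ u ∈ N, (X u c - ν.real A) = #{u ∈ N | c u ∈ A} - #N * ν.real A := by
    simp [X, Set.indicator_apply, sum_boole]
  simp only [sum_X] at hoeffding
  refine hoeffding.trans_eq (congrArg _ ?_)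
  simp only [sum_const, nsmul_eq_mul]
  push_cast
  ring

theorem measureReal_pi_le_abs_card_filter_sub_le {α κ : Type*} [Fintype α] [MeasurableSpace κ]
    (ν : Measure κ) [IsProbabilityMeasure ν] {A : Set κ} [DecidablePred (· ∈ A)]
    (hA : MeasurableSet A) (N : Finset α) {t : ℝ} (ht : 0 ≤ t) :
    (Measure.pi fun _ : α ↦ ν).real {c | t ≤ |#{u ∈ N | c u ∈ A} - #N * ν.real A|} ≤
      2 * Real.exp (-(2 * t ^ 2) / #N) := by
  have compl_count (c : α → κ) : (#{u ∈ N | c u ∈ Aᶜ} : ℝ) - #N * ν.real Aᶜ =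
      -(#{u ∈ N | c u ∈ A} - #N * ν.real A) := by
    have hcard := card_filter_add_card_filter_not (s := N) fun u ↦ c u ∈ A
    rw [probReal_compl_eq_one_sub hA, ← hcard]
    simp only [Set.mem_compl_iff]
    push_cast
    ring
  have upper := measureReal_pi_le_card_filter_sub_le ν hA N ht
  have lower := measureReal_pi_le_card_filter_sub_le ν hA.compl N ht
  simp only [compl_count] at lower
  simp only [le_abs, Set.ofPred_or]
  linarith [measureReal_union_le (μ := Measure.pi fun _ : α ↦ ν)
    {c | t ≤ #{u ∈ N | c u ∈ A} - #N * ν.real A}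
    {c | t ≤ -(#{u ∈ N | c u ∈ A} - #N * ν.real A)}]

theorem exists_card_filter_mem_le_sum_measureReal {Ω ι : Type*} [MeasurableSpace Ω]
    {μ : Measure Ω} [IsProbabilityMeasure μ] [Fintype ι] {E : ι → Set Ω}
    (hE : ∀ i, MeasurableSet (E i)) [∀ ω, DecidablePred fun i ↦ ω ∈ E i] :
    ∃ ω, (#{i | ω ∈ E i} : ℝ) ≤ ∑ i, μ.real (E i) := by
  have integrable_indicator (i : ι) : Integrable ((E i).indicator (1 : Ω → ℝ)) μ :=
    (integrable_const 1).indicator (hE i)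
  obtain ⟨ω, hω⟩ := exists_le_integral
    (integrable_finsetSum univ fun i _ ↦ integrable_indicator i)
  refine ⟨ω, ?_⟩
  rw [integral_finsetSum _ fun i _ ↦ integrable_indicator i] at hω
  simp only [integral_indicator_one (hE _)] at hω
  simpa [Set.indicator_apply, sum_boole] using hω

theorem measureReal_uniformOn_univ_singleton {κ : Type*} [Fintype κ] [MeasurableSpace κ]
    [MeasurableSingletonClass κ] (i : κ) :
    (uniformOn (Set.univ : Set κ)).real {i} = 1 / Fintype.card κ := by
  simp [measureReal_def, uniformOn_univ]

/-- Each colour class of `c` meets `N` in `R` elements up to a relative error `η`. -/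
def SplitsEvenly {α κ : Type*} [DecidableEq κ] (c : α → κ) (N : Finset α) (η R : ℝ) : Prop :=
  ∀ i, |#{u ∈ N | c u = i} - R| ≤ η * R

-- The mean of a colour count is `#N / card κ`, which is within half of the allowed error of
-- `Q / card κ`; a failing colouring therefore deviates from the mean by the other half.
theorem exists_le_abs_sub_of_not_splitsEvenly {α κ : Type*} [Fintype κ] [Nonempty κ]
    [DecidableEq κ] {c : α → κ} {N : Finset α} {η Q : ℝ} (hN : |#N - Q| ≤ η / 2 * Q)
    (hc : ¬ SplitsEvenly c N η (Q / Fintype.card κ)) :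
    ∃ i, η / 2 * (Q / Fintype.card κ) ≤ |#{u ∈ N | c u = i} - #N / (Fintype.card κ : ℝ)| := by
  simp only [SplitsEvenly, not_forall, not_le] at hc
  obtain ⟨i, hi⟩ := hc
  have card_pos : (0 : ℝ) < Fintype.card κ := by positivity
  have mean_close :
      |#N / (Fintype.card κ : ℝ) - Q / Fintype.card κ| ≤ η / 2 * (Q / Fintype.card κ) := by
    rw [← sub_div, abs_div, abs_of_pos card_pos, ← mul_div_assoc]
    gcongr
  have triangle :=
    abs_sub_le (#{u ∈ N | c u = i} : ℝ) (#N / Fintype.card κ) (Q / Fintype.card κ)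
  exact ⟨i, by linarith⟩

theorem measureReal_not_splitsEvenly_le {α κ : Type*} [Fintype α] [Fintype κ]
    [Nonempty κ] [DecidableEq κ] [MeasurableSpace κ] [MeasurableSingletonClass κ] {N : Finset α}
    {η Q : ℝ} (hη₀ : 0 ≤ η) (hη₁ : η ≤ 1) (hQ : 0 < Q) (hN : |#N - Q| ≤ η / 2 * Q) :
    (Measure.pi fun _ : α ↦ uniformOn (Set.univ : Set κ)).real
        {c | ¬ SplitsEvenly c N η (Q / Fintype.card κ)} ≤
      Fintype.card κ * (2 * Real.exp (-(η ^ 2 / (4 * Fintype.card κ ^ 2) * Q))) := by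
  have : IsProbabilityMeasure (uniformOn (Set.univ : Set κ)) :=
    isProbabilityMeasure_uniformOn Set.finite_univ Set.univ_nonempty
  set μ := Measure.pi fun _ : α ↦ uniformOn (Set.univ : Set κ)
  set m : ℝ := (Fintype.card κ : ℝ) with hm
  have N_pos : (0 : ℝ) < #N := by nlinarith [neg_le_of_abs_le hN]
  have N_le : (#N : ℝ) ≤ 2 * Q := by nlinarith [le_of_abs_le hN]
  have single_color (i : κ) :
      μ.real {c | η / 2 * (Q / m) ≤ |#{u ∈ N | c u = i} - #N / m|} ≤
        2 * Real.exp (-(η ^ 2 / (4 * m ^ 2) * Q)) := by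
    have h := measureReal_pi_le_abs_card_filter_sub_le (uniformOn (Set.univ : Set κ))
      (measurableSet_singleton i) N (t := η / 2 * (Q / m)) (by positivity)
    simp only [Set.mem_singleton_iff, measureReal_uniformOn_univ_singleton, mul_one_div] at h
    refine h.trans ?_
    gcongr
    rw [neg_div, neg_le_neg_iff, le_div_iff₀ N_pos]
    calc η ^ 2 / (4 * m ^ 2) * Q * #N ≤ η ^ 2 / (4 * m ^ 2) * Q * (2 * Q) := by gcongr
      _ = 2 * (η / 2 * (Q / m)) ^ 2 := by field_simp; norm_num
  calc μ.real {c | ¬ SplitsEvenly c N η (Q / m)}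
      ≤ μ.real (⋃ i, {c | η / 2 * (Q / m) ≤ |#{u ∈ N | c u = i} - #N / m|}) :=
        measureReal_mono fun _ hc ↦
          Set.mem_iUnion.mpr (exists_le_abs_sub_of_not_splitsEvenly hN hc)
    _ ≤ ∑ i, μ.real {c | η / 2 * (Q / m) ≤ |#{u ∈ N | c u = i} - #N / m|} :=
        measureReal_iUnion_fintype_le _
    _ ≤ ∑ _i : κ, 2 * Real.exp (-(η ^ 2 / (4 * m ^ 2) * Q)) :=
        sum_le_sum fun i _ ↦ single_color i
    _ = m * (2 * Real.exp (-(η ^ 2 / (4 * m ^ 2) * Q))) := by simp [hm]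

theorem exists_coloring_splitsEvenly_off {α β : Type*} (κ : Type*) [Finite α] [Fintype β]
    [Fintype κ] [Nonempty κ] [DecidableEq κ] {N : β → Finset α} {η Q : ℝ} (hη₀ : 0 ≤ η)
    (hη₁ : η ≤ 1) (hQ : 0 < Q) (hN : ∀ b, |#(N b) - Q| ≤ η / 2 * Q) :
    ∃ (c : α → κ) (B : Finset β),
      (#B : ℝ) ≤ Fintype.card β *
        (Fintype.card κ * (2 * Real.exp (-(η ^ 2 / (4 * Fintype.card κ ^ 2) * Q)))) ∧
      ∀ b ∉ B, SplitsEvenly c (N b) η (Q / Fintype.card κ) := by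
  classical
  cases nonempty_fintype α
  let _ : MeasurableSpace κ := ⊤
  have : IsProbabilityMeasure (uniformOn (Set.univ : Set κ)) :=
    isProbabilityMeasure_uniformOn Set.finite_univ Set.univ_nonempty
  obtain ⟨c, hc⟩ := exists_card_filter_mem_le_sum_measureReal
    (μ := Measure.pi fun _ : α ↦ uniformOn (Set.univ : Set κ))
    (E := fun b ↦ {c | ¬ SplitsEvenly c (N b) η (Q / Fintype.card κ)})
    fun _ ↦ (Set.toFinite _).measurableSet
  refine ⟨c, _, hc.trans ?_, fun b hb ↦ by simpa using hb⟩
  refine (sum_le_card_nsmul _ _ _ fun b _ ↦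
    measureReal_not_splitsEvenly_le hη₀ hη₁ hQ (hN b)).trans_eq ?_
  rw [nsmul_eq_mul, card_univ]

end RandomColoring

section LayeredPaths

open Finset

theorem exists_injOn_forall_mem_of_card_le_card_biUnion {ι α : Type*} [DecidableEq α] [Nonempty α]
    {T : Finset ι} {t : ι → Finset α} (h : ∀ S ⊆ T, #S ≤ #(S.biUnion t)) :
    ∃ f : ι → α, Set.InjOn f T ∧ ∀ a ∈ T, f a ∈ t a := by
  classical
  have hall_condition (S : Finset T) : #S ≤ #(S.biUnion fun a ↦ t a) := by
    have hS := h (S.map (.subtype _)) fun a ha ↦ by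
      obtain ⟨b, -, rfl⟩ := mem_map.mp ha
      exact b.2
    rwa [card_map, map_eq_image, image_biUnion] at hS
  obtain ⟨f, hf, hft⟩ := (all_card_le_biUnion_card_iff_exists_injective _).mp hall_condition
  have extend_apply :=
    Subtype.val_injective.extend_apply f fun _ : ι ↦ Classical.arbitrary α
  refine ⟨Function.extend Subtype.val f fun _ ↦ Classical.arbitrary α, fun a ha b hb hab ↦ ?_,
    fun a ha ↦ ?_⟩
  · have := extend_apply ⟨a, ha⟩
    have := extend_apply ⟨b, hb⟩
    simp_all [hf.eq_iff]
  · exact (extend_apply ⟨a, ha⟩).symm ▸ hft ⟨a, ha⟩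

theorem exists_subset_injOn_of_card_le_card_biUnion_add {ι α : Type*} [DecidableEq α] [Nonempty α]
    {T : Finset ι} {t : ι → Finset α} {D : ℕ} (h : ∀ S ⊆ T, #S ≤ #(S.biUnion t) + D) :
    ∃ T' ⊆ T, #T ≤ #T' + D ∧ ∃ f : ι → α, Set.InjOn f T' ∧ ∀ a ∈ T', f a ∈ t a := by
  -- Ordinary Hall applies once `D` dummy elements are made available to every index.
  obtain ⟨g, hg, hgt⟩ := exists_injOn_forall_mem_of_card_le_card_biUnion (T := T)
    (t := fun a ↦ (t a).disjSum (univ : Finset (Fin D))) fun S hS ↦ by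
      rcases S.eq_empty_or_nonempty with rfl | ⟨a, ha⟩
      · simp
      have : (S.biUnion fun a ↦ (t a).disjSum (univ : Finset (Fin D))) =
          (S.biUnion t).disjSum univ := by
        ext (x | x)
        · simp
        · simpa using ⟨a, ha⟩
      simpa [this, card_disjSum] using h S hS
  have left_of_isLeft (a : ι) (ha : a ∈ T.filter fun a ↦ (g a).isLeft) :
      ∃ x ∈ t a, g a = .inl x := by
    obtain ⟨haT, hleft⟩ := mem_filter.mp ha
    obtain ⟨x, hx⟩ := Sum.isLeft_iff.mp hleft
    exact ⟨x, by simpa [hx] using hgt a haT, hx⟩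
  choose! f hft hgf using left_of_isLeft
  refine ⟨T.filter fun a ↦ (g a).isLeft, filter_subset _ _, ?_, f, fun a ha b hb hab ↦ ?_, hft⟩
  · have dummies : #(T.filter fun a ↦ ¬ (g a).isLeft) ≤ #((univ : Finset (Fin D)).map .inr) :=
      card_le_card_of_injOn (f := g)
        (fun a ha ↦ by
          obtain ⟨x, hx⟩ := Sum.isRight_iff.mp (Sum.not_isLeft.mp (mem_filter.mp ha).2)
          simp [hx])
        (hg.mono fun a ha ↦ (mem_filter.mp ha).1)
    rw [card_map, card_univ, Fintype.card_fin] at dummies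
    rw [← card_filter_add_card_filter_not (s := T) fun a ↦ (g a).isLeft]
    gcongr
  · exact hg (mem_filter.mp ha).1 (mem_filter.mp hb).1 (by rw [hgf a ha, hgf b hb, hab])

/-- A family of disjoint paths crossing the layers `W 0, …, W k` in this order: the path with
index `a ∈ T` visits `p 0 a, …, p k a`, and different paths use different vertices of each layer. -/
structure IsLayeredPathSystem {ι α : Type*} (G : SimpleGraph α) (W : ℕ → Finset α) (k : ℕ)
    (T : Finset ι) (p : ℕ → ι → α) : Prop where
  mem : ∀ j ≤ k, ∀ a ∈ T, p j a ∈ W j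
  injOn : ∀ j ≤ k, Set.InjOn (p j) T
  adj : ∀ j < k, ∀ a ∈ T, G.Adj (p j a) (p (j + 1) a)

namespace IsLayeredPathSystem

variable {ι α : Type*} {G : SimpleGraph α} {W : ℕ → Finset α} {k : ℕ} {T : Finset ι}
  {p : ℕ → ι → α}

theorem mono (h : IsLayeredPathSystem G W k T p) {T' : Finset ι} (hT' : T' ⊆ T) :
    IsLayeredPathSystem G W k T' p where
  mem j hj a ha := h.mem j hj a (hT' ha)
  injOn j hj := (h.injOn j hj).mono hT'
  adj j hj a ha := h.adj j hj a (hT' ha)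

theorem extend (h : IsLayeredPathSystem G W k T p) {f : ι → α} (hf : Set.InjOn f T)
    (hfW : ∀ a ∈ T, f a ∈ W (k + 1)) (hadj : ∀ a ∈ T, G.Adj (p k a) (f a)) :
    IsLayeredPathSystem G W (k + 1) T (Function.update p (k + 1) f) where
  mem j hj a ha := by
    obtain rfl | hj := hj.eq_or_lt
    · simpa using hfW a ha
    · simpa [hj.ne] using h.mem j (by lia) a ha
  injOn j hj := by
    obtain rfl | hj := hj.eq_or_lt
    · simpa using hf
    · simpa [hj.ne] using h.injOn j (by lia)
  adj j hj a ha := by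
    obtain rfl | hj := (Nat.le_of_lt_succ hj).eq_or_lt
    · simpa using hadj a ha
    · simpa [show j ≠ k + 1 by lia, show j ≠ k by lia] using h.adj j hj a ha

theorem exists_extend [DecidableEq α] [Nonempty α] [DecidableRel G.Adj]
    (h : IsLayeredPathSystem G W k T p) {D : ℕ}
    (hall : ∀ S ⊆ W k, #S ≤ #(S.biUnion fun v ↦ {u ∈ W (k + 1) | G.Adj v u}) + D) :
    ∃ T' ⊆ T, #T ≤ #T' + D ∧ ∃ p', IsLayeredPathSystem G W (k + 1) T' p' := by
  have hall_T (S : Finset ι) (hS : S ⊆ T) :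
      #S ≤ #(S.biUnion fun a ↦ {u ∈ W (k + 1) | G.Adj (p k a) u}) + D := by
    have hS_image := hall (S.image (p k)) fun v hv ↦ by
      obtain ⟨a, ha, rfl⟩ := mem_image.mp hv
      exact h.mem k le_rfl a (hS ha)
    rwa [card_image_of_injOn ((h.injOn k le_rfl).mono hS), image_biUnion] at hS_image
  obtain ⟨T', hT', hcard, f, hf, hft⟩ := exists_subset_injOn_of_card_le_card_biUnion_add hall_T
  exact ⟨T', hT', hcard, _, (h.mono hT').extend hf (fun a ha ↦ (mem_filter.mp (hft a ha)).1)
    fun a ha ↦ (mem_filter.mp (hft a ha)).2⟩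

end IsLayeredPathSystem

theorem exists_isLayeredPathSystem {α : Type*} [DecidableEq α] [Nonempty α] {G : SimpleGraph α}
    [DecidableRel G.Adj] {W : ℕ → Finset α} {D k : ℕ}
    (hall : ∀ j < k, ∀ S ⊆ W j, #S ≤ #(S.biUnion fun v ↦ {u ∈ W (j + 1) | G.Adj v u}) + D) :
    ∃ (T : Finset α) (p : ℕ → α → α), IsLayeredPathSystem G W k T p ∧ #(W 0) ≤ #T + k * D := by
  induction k with
  | zero =>
    refine ⟨W 0, fun _ ↦ id, ⟨fun j hj a ha ↦ ?_, fun _ _ ↦ Set.injOn_id _, by simp⟩, by simp⟩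
    rwa [Nat.le_zero.mp hj]
  | succ k ih =>
    obtain ⟨T, p, hp, hT⟩ := ih fun j hj ↦ hall j (hj.trans k.lt_succ_self)
    obtain ⟨T', -, hcard, p', hp'⟩ := hp.exists_extend (hall k k.lt_succ_self)
    exact ⟨T', p', hp', by lia⟩

namespace IsLayeredPathSystem

variable {ι α : Type*} {G : SimpleGraph α} {W : ℕ → Finset α} {k : ℕ} {T : Finset ι}
  {p : ℕ → ι → α}

theorem exists_subset_ends_notMem (h : IsLayeredPathSystem G W k T p) (X : Finset α) :
    ∃ T' ⊆ T, #T ≤ #T' + 2 * #X ∧ ∀ a ∈ T', p 0 a ∉ X ∧ p k a ∉ X := by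
  classical
  have card_hit_le (j : ℕ) (hj : j ≤ k) : #{a ∈ T | p j a ∈ X} ≤ #X :=
    card_le_card_of_injOn (p j) (fun a ha ↦ (mem_filter.mp ha).2)
      ((h.injOn j hj).mono (filter_subset _ _))
  refine ⟨{a ∈ T | p 0 a ∉ X ∧ p k a ∉ X}, filter_subset _ _, ?_, fun a ha ↦ (mem_filter.mp ha).2⟩
  have cover : T ⊆ {a ∈ T | p 0 a ∉ X ∧ p k a ∉ X} ∪
      ({a ∈ T | p 0 a ∈ X} ∪ {a ∈ T | p k a ∈ X}) := fun a ha ↦ by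
    simp only [mem_union, mem_filter]
    tauto
  have := card_le_card cover
  have := card_union_le {a ∈ T | p 0 a ∉ X ∧ p k a ∉ X} ({a ∈ T | p 0 a ∈ X} ∪ {a ∈ T | p k a ∈ X})
  have := card_union_le {a ∈ T | p 0 a ∈ X} {a ∈ T | p k a ∈ X}
  linarith [card_hit_le 0 k.zero_le, card_hit_le k le_rfl]

theorem ncard_neighborSet_inter_ends_le [DecidableRel G.Adj] (h : IsLayeredPathSystem G W k T p)
    (v : α) :
    (G.neighborSet v ∩ (p 0 '' T ∪ p k '' T)).ncard ≤
      #{u ∈ W 0 | G.Adj v u} + #{u ∈ W k | G.Adj v u} := by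
  classical
  refine le_trans ?_ (card_union_le _ _)
  rw [← Set.ncard_coe_finset]
  refine Set.ncard_le_ncard ?_ (finite_toSet _)
  rintro _ ⟨hv, ⟨a, ha, rfl⟩ | ⟨a, ha, rfl⟩⟩ <;> rw [coe_union]
  · exact .inl (mem_coe.mpr (mem_filter.mpr ⟨h.mem 0 k.zero_le a ha, hv⟩))
  · exact .inr (mem_coe.mpr (mem_filter.mpr ⟨h.mem k le_rfl a ha, hv⟩))

end IsLayeredPathSystem

theorem exists_isPath_support_eq_map_range {α : Type*} {G : SimpleGraph α} {k : ℕ} {s : ℕ → α}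
    (hadj : ∀ j < k, G.Adj (s j) (s (j + 1))) (hinj : Set.InjOn s (Set.Iic k)) :
    ∃ P : G.Walk (s 0) (s k), P.IsPath ∧ P.support = (List.range (k + 1)).map s := by
  have hne : (List.range (k + 1)).map s ≠ [] := by simp
  have hchain : ((List.range (k + 1)).map s).IsChain G.Adj := by
    simpa [List.isChain_iff_getElem] using hadj
  let P : G.Walk (s 0) (s k) := (SimpleGraph.Walk.ofSupport _ hne hchain).copy
    (by simp [List.head_map, List.head_range]) (by simp)
  have support_P : P.support = (List.range (k + 1)).map s := by simp [P]
  refine ⟨P, ?_, support_P⟩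
  rw [SimpleGraph.Walk.isPath_def, support_P]
  exact List.nodup_range.map_on fun i hi j hj ↦ hinj
    (Nat.le_of_lt_succ (List.mem_range.mp hi)) (Nat.le_of_lt_succ (List.mem_range.mp hj))

/-- `G[V]` contains `t` vertex-disjoint paths of length `k` such that every vertex of `G` has at
most `M` neighbours among their endvertices. The paths are walks in `G` with support in `V`, running
from `x i` to `y i`. -/
def HasSparseEndedPaths {α : Type*} (G : SimpleGraph α) (V : Set α) (k t : ℕ) (M : ℝ) : Prop :=
  ∃ (x y : Fin t → α) (P : ∀ i : Fin t, G.Walk (x i) (y i)),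
    (∀ i, (P i).IsPath ∧ (P i).length = k ∧ ∀ w ∈ (P i).support, w ∈ V) ∧
    (∀ i j, i ≠ j → ∀ w : α, w ∈ (P i).support → w ∉ (P j).support) ∧
    (∀ v : α, ((G.neighborSet v ∩ (Set.range x ∪ Set.range y)).ncard : ℝ) ≤ M)

theorem hasSparseEndedPaths_zero {α : Type*} (G : SimpleGraph α) (V : Set α) (k : ℕ) {M : ℝ}
    (hM : 0 ≤ M) : HasSparseEndedPaths G V k 0 M :=
  ⟨Fin.elim0, Fin.elim0, fun i ↦ i.elim0, fun i ↦ i.elim0, fun i ↦ i.elim0, fun _ ↦ by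
    simpa using hM⟩

theorem IsLayeredPathSystem.hasSparseEndedPaths {ι α : Type*} [Finite α] {G : SimpleGraph α}
    {W : ℕ → Finset α} {k t : ℕ} {T : Finset ι} {p : ℕ → ι → α} {V : Set α} {M : ℝ}
    (h : IsLayeredPathSystem G W k T p) (hdisj : (Set.Iic k).PairwiseDisjoint W)
    (hWV : ∀ j ≤ k, (W j : Set α) ⊆ V) (ht : t ≤ #T)
    (hM : ∀ v, ((G.neighborSet v ∩ (p 0 '' T ∪ p k '' T)).ncard : ℝ) ≤ M) :
    HasSparseEndedPaths G V k t M := by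
  have same_layer {i j : ℕ} (hi : i ≤ k) (hj : j ≤ k) {a b : ι} (ha : a ∈ T) (hb : b ∈ T)
      (hab : p i a = p j b) : i = j :=
    hdisj.elim_finset hi hj _ (h.mem i hi a ha) (hab ▸ h.mem j hj b hb)
  obtain ⟨e⟩ : Nonempty (Fin t ↪ T) := by
    simpa [Function.Embedding.nonempty_iff_card_le] using ht
  have exists_path (i : Fin t) := exists_isPath_support_eq_map_range (s := fun j ↦ p j (e i))
    (fun j hj ↦ h.adj j hj _ (e i).2) fun _ hj _ hj' ↦ same_layer hj hj' (e i).2 (e i).2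
  choose P hPath hsupport using exists_path
  have mem_support {i : Fin t} {w : α} (hw : w ∈ (P i).support) : ∃ j ≤ k, p j (e i) = w := by
    simpa [hsupport, Nat.lt_succ_iff] using hw
  refine ⟨_, _, P, fun i ↦ ⟨hPath i, ?_, fun w hw ↦ ?_⟩, fun i i' hii' w hw hw' ↦ hii' ?_,
    fun v ↦ le_trans ?_ (hM v)⟩
  · have := congrArg List.length (hsupport i)
    simpa using this
  · obtain ⟨j, hj, rfl⟩ := mem_support hw
    exact hWV j hj (h.mem j hj _ (e i).2)
  · obtain ⟨j, hj, hjw⟩ := mem_support hw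
    obtain ⟨j', hj', rfl⟩ := mem_support hw'
    obtain rfl := same_layer hj hj' (e i).2 (e i').2 hjw
    exact e.injective (Subtype.ext (h.injOn j hj (e i).2 (e i').2 hjw))
  · refine Nat.cast_le.mpr (Set.ncard_le_ncard (Set.inter_subset_inter_right _ ?_) (Set.toFinite _))
    refine Set.union_subset_union ?_ ?_ <;> rintro _ ⟨i, rfl⟩ <;> exact ⟨_, (e i).2, rfl⟩

end LayeredPaths

section NearlyRegular

open Finset

theorem sum_card_filter_adj_comm {α : Type*} (G : SimpleGraph α) [DecidableRel G.Adj]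
    (S T : Finset α) :
    ∑ v ∈ S, #{u ∈ T | G.Adj v u} = ∑ u ∈ T, #{v ∈ S | G.Adj u v} :=
  (sum_card_bipartiteAbove_eq_sum_card_bipartiteBelow G.Adj).trans <|
    sum_congr rfl fun u _ ↦ by simp only [bipartiteBelow, G.adj_comm u]

theorem card_sub_card_mul_le_sum {α : Type*} {f : α → ℝ} {S B : Finset α} {lo : ℝ} (hlo : 0 ≤ lo)
    (hf : ∀ v ∈ S, 0 ≤ f v) (h : ∀ v ∈ S, v ∉ B → lo ≤ f v) :
    ((#S : ℝ) - #B) * lo ≤ ∑ v ∈ S, f v := by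
  classical
  have card_sdiff_ge : (#S : ℝ) - #B ≤ #(S \ B) := by
    rw [sub_le_iff_le_add]
    exact_mod_cast tsub_le_iff_right.mp (le_card_sdiff B S)
  calc ((#S : ℝ) - #B) * lo ≤ #(S \ B) * lo := by gcongr
    _ ≤ ∑ v ∈ S \ B, f v := by
      simpa using card_nsmul_le_sum (S \ B) f lo fun v hv ↦
        h v (mem_sdiff.mp hv).1 (mem_sdiff.mp hv).2
    _ ≤ ∑ v ∈ S, f v := sum_le_sum_of_subset_of_nonneg sdiff_subset fun v hv _ ↦ hf v hv

theorem sum_le_card_mul_add_card_mul {α : Type*} {f : α → ℝ} {S B : Finset α} {hi d : ℝ}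
    (hhi : 0 ≤ hi) (hd : 0 ≤ d) (hfd : ∀ v ∈ S, f v ≤ d) (h : ∀ v ∈ S, v ∉ B → f v ≤ hi) :
    ∑ v ∈ S, f v ≤ #S * hi + #B * d := by
  classical
  rw [← sum_sdiff (inter_subset_left (s₁ := S) (s₂ := B)), sdiff_inter_self_left]
  calc ∑ v ∈ S \ B, f v + ∑ v ∈ S ∩ B, f v ≤ #(S \ B) * hi + #(S ∩ B) * d := by
        rw [← nsmul_eq_mul, ← nsmul_eq_mul]
        exact add_le_add
          (sum_le_card_nsmul _ _ _ fun v hv ↦ h v (mem_sdiff.mp hv).1 (mem_sdiff.mp hv).2)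
          (sum_le_card_nsmul _ _ _ fun v hv ↦ hfd v (mem_inter.mp hv).1)
    _ ≤ #S * hi + #B * d := by
        gcongr
        exacts [sdiff_subset, inter_subset_right]

/-- The graph `G` has maximum degree at most `d` and is nearly regular into each of the layers
`W 0, …, W k`: outside a set `B` of at most `η |G| / d` exceptional vertices, every vertex has
`(1 ± η) R` neighbours in each layer. The size of `B` is bounded in product form. -/
structure IsNearlyRegularLayering {α : Type*} [Fintype α] (G : SimpleGraph α) [DecidableRel G.Adj]
    (W : ℕ → Finset α) (k : ℕ) (B : Finset α) (d : ℕ) (η R : ℝ) : Prop where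
  degree_le : ∀ v, #{u | G.Adj v u} ≤ d
  card_mul_le : (#B : ℝ) * d ≤ η * Fintype.card α
  abs_sub_le : ∀ v ∉ B, ∀ j ≤ k, |#{u ∈ W j | G.Adj v u} - R| ≤ η * R

namespace IsNearlyRegularLayering

variable {α : Type*} [Fintype α] {G : SimpleGraph α} [DecidableRel G.Adj]
  {W : ℕ → Finset α} {k : ℕ} {B : Finset α} {d : ℕ} {η R : ℝ}

theorem card_filter_adj_le (h : IsNearlyRegularLayering G W k B d η R) (S : Finset α) (v : α) :
    (#{u ∈ S | G.Adj v u} : ℝ) ≤ d := by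
  exact_mod_cast (card_le_card (filter_subset_filter _ S.subset_univ)).trans (h.degree_le v)

theorem card_le (h : IsNearlyRegularLayering G W k B d η R) (hd : 1 ≤ d) :
    (#B : ℝ) ≤ η * Fintype.card α :=
  (le_mul_of_one_le_right (by positivity) (by exact_mod_cast hd)).trans h.card_mul_le

theorem le_card_filter_adj (h : IsNearlyRegularLayering G W k B d η R) {v : α} (hv : v ∉ B)
    {j : ℕ} (hj : j ≤ k) : (1 - η) * R ≤ #{u ∈ W j | G.Adj v u} := by
  linarith [neg_le_of_abs_le (h.abs_sub_le v hv j hj)]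

theorem card_filter_adj_le_of_notMem (h : IsNearlyRegularLayering G W k B d η R) {v : α}
    (hv : v ∉ B) {j : ℕ} (hj : j ≤ k) : (#{u ∈ W j | G.Adj v u} : ℝ) ≤ (1 + η) * R := by
  linarith [le_of_abs_le (h.abs_sub_le v hv j hj)]

theorem sq_one_sub_mul_le_card_mul (h : IsNearlyRegularLayering G W k B d η R) (hη : η ≤ 1)
    (hR : 0 ≤ R) (hd : 1 ≤ d) {j : ℕ} (hj : j ≤ k) :
    (1 - η) ^ 2 * R * Fintype.card α ≤ #(W j) * d := by
  have lower_nonneg : 0 ≤ (1 - η) * R := mul_nonneg (by linarith) hR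
  calc (1 - η) ^ 2 * R * Fintype.card α
      = (Fintype.card α - η * Fintype.card α) * ((1 - η) * R) := by ring
    _ ≤ (Fintype.card α - #B) * ((1 - η) * R) := by gcongr; exact h.card_le hd
    _ ≤ ∑ v, (#{u ∈ W j | G.Adj v u} : ℝ) := by
        rw [← card_univ]
        exact card_sub_card_mul_le_sum lower_nonneg (fun _ _ ↦ by positivity)
          fun v _ hv ↦ h.le_card_filter_adj hv hj
    _ = ∑ u ∈ W j, (#{v | G.Adj u v} : ℝ) := by
        exact_mod_cast sum_card_filter_adj_comm G univ (W j)
    _ ≤ #(W j) * d := by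
        rw [← nsmul_eq_mul]
        exact sum_le_card_nsmul _ _ _ fun u _ ↦ h.card_filter_adj_le univ u

theorem card_sub_mul_le_card_biUnion_mul_add [DecidableEq α]
    (h : IsNearlyRegularLayering G W k B d η R)
    (hη₀ : 0 ≤ η) (hη₁ : η ≤ 1) (hR : 0 ≤ R) {j : ℕ} (hj : j < k) {S : Finset α} (hS : S ⊆ W j) :
    ((#S : ℝ) - #B) * ((1 - η) * R) ≤
      #(S.biUnion fun v ↦ {u ∈ W (j + 1) | G.Adj v u}) * ((1 + η) * R) + #B * d := by
  set M := S.biUnion fun v ↦ {u ∈ W (j + 1) | G.Adj v u}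
  have lower_nonneg : 0 ≤ (1 - η) * R := mul_nonneg (by linarith) hR
  calc ((#S : ℝ) - #B) * ((1 - η) * R) ≤ ∑ v ∈ S, (#{u ∈ W (j + 1) | G.Adj v u} : ℝ) :=
        card_sub_card_mul_le_sum lower_nonneg (fun _ _ ↦ by positivity)
          fun v _ hv ↦ h.le_card_filter_adj hv hj
    _ ≤ ∑ v ∈ S, (#{u ∈ M | G.Adj v u} : ℝ) :=
        sum_le_sum fun v hv ↦ Nat.cast_le.mpr <| card_le_card fun u hu ↦
          mem_filter.mpr ⟨mem_biUnion.mpr ⟨v, hv, hu⟩, (mem_filter.mp hu).2⟩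
    _ = ∑ u ∈ M, (#{v ∈ S | G.Adj u v} : ℝ) := by exact_mod_cast sum_card_filter_adj_comm G S M
    _ ≤ #M * ((1 + η) * R) + #B * d :=
        sum_le_card_mul_add_card_mul (by positivity) (by positivity)
          (fun u _ ↦ h.card_filter_adj_le S u) fun u _ hu ↦
            (Nat.cast_le.mpr (card_le_card (filter_subset_filter _ hS))).trans
              (h.card_filter_adj_le_of_notMem hu hj.le)

theorem card_le_card_biUnion_add [DecidableEq α] (h : IsNearlyRegularLayering G W k B d η R)
    (hη₀ : 0 ≤ η) (hη₁ : η ≤ 1) (hR : 1 ≤ R) (hd : 1 ≤ d) {j : ℕ} (hj : j < k) {S : Finset α}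
    (hS : S ⊆ W j) :
    #S ≤ #(S.biUnion fun v ↦ {u ∈ W (j + 1) | G.Adj v u}) + ⌊4 * η * Fintype.card α⌋₊ := by
  set M := S.biUnion fun v ↦ {u ∈ W (j + 1) | G.Adj v u}
  set n : ℝ := (Fintype.card α : ℝ)
  have count := h.card_sub_mul_le_card_biUnion_mul_add hη₀ hη₁ (by linarith) hj hS
  have error_le : #B * (1 - η) * R + #B * d ≤ 2 * (η * n) * R := by
    have bad_le : #B * (1 - η) * R ≤ η * n * R :=
      mul_le_mul_of_nonneg_right
        ((mul_le_of_le_one_right (Nat.cast_nonneg _) (by linarith)).trans (h.card_le hd))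
        (by linarith)
    have edges_le : #B * d ≤ η * n * R :=
      h.card_mul_le.trans (le_mul_of_one_le_right (by positivity) hR)
    linarith
  have scaled : (#S - #M : ℝ) * R ≤ (η * (#S + #M) + 2 * (η * n)) * R := by linarith
  have card_le_n (X : Finset α) : (#X : ℝ) ≤ n := Nat.cast_le.mpr (card_le_univ X)
  have card_S_le : (#S : ℝ) ≤ 4 * η * n + #M := by
    have := le_of_mul_le_mul_right scaled (by linarith)
    nlinarith [card_le_n S, card_le_n M]
  rw [add_comm, ← Nat.floor_add_natCast (by positivity)]
  exact Nat.le_floor card_S_le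

theorem exists_sparse_isLayeredPathSystem [Nonempty α] (h : IsNearlyRegularLayering G W k B d η R)
    (hη₀ : 0 ≤ η) (hη₁ : η ≤ 1) (hR : 1 ≤ R) (hd : 1 ≤ d) :
    ∃ (T : Finset α) (p : ℕ → α → α), IsLayeredPathSystem G W k T p ∧
      #(W 0) - (4 * k + 2) * η * Fintype.card α ≤ #T ∧
      ∀ v, ((G.neighborSet v ∩ (p 0 '' T ∪ p k '' T)).ncard : ℝ) ≤ 2 * ((1 + η) * R) := by
  classical
  obtain ⟨T, p, hp, hT⟩ := exists_isLayeredPathSystem fun j hj S hS ↦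
    h.card_le_card_biUnion_add hη₀ hη₁ hR hd hj hS
  -- Exceptional vertices may see too many ends, so no path may end next to one.
  let X := B.biUnion fun v ↦ {u | G.Adj v u}
  obtain ⟨T', hT', hcard, hends⟩ := hp.exists_subset_ends_notMem X
  refine ⟨T', p, hp.mono hT', ?_, fun v ↦ ?_⟩
  · have card_X_le : (#X : ℝ) ≤ η * Fintype.card α :=
      le_trans (by exact_mod_cast card_biUnion_le_card_mul B _ d fun v _ ↦ h.degree_le v)
        h.card_mul_le
    have floor_le : (k : ℝ) * ⌊4 * η * Fintype.card α⌋₊ ≤ k * (4 * η * Fintype.card α) := by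
      gcongr
      exact Nat.floor_le (by positivity)
    have hT_real : (#(W 0) : ℝ) ≤ #T + k * ⌊4 * η * Fintype.card α⌋₊ := by exact_mod_cast hT
    have hcard_real : (#T : ℝ) ≤ #T' + 2 * #X := by exact_mod_cast hcard
    linarith
  · by_cases hv : v ∈ B
    · have no_ends : G.neighborSet v ∩ (p 0 '' T' ∪ p k '' T') = ∅ := by
        rw [Set.eq_empty_iff_forall_notMem]
        rintro u ⟨hu, hend⟩
        have hX : u ∈ X := mem_biUnion.mpr ⟨v, hv, by simpa using hu⟩
        obtain ⟨a, ha, rfl⟩ | ⟨a, ha, rfl⟩ := hend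
        exacts [(hends a ha).1 hX, (hends a ha).2 hX]
      rw [no_ends, Set.ncard_empty, Nat.cast_zero]
      positivity
    · calc ((G.neighborSet v ∩ (p 0 '' T' ∪ p k '' T')).ncard : ℝ)
          ≤ #{u ∈ W 0 | G.Adj v u} + #{u ∈ W k | G.Adj v u} := by
            exact_mod_cast (hp.mono hT').ncard_neighborSet_inter_ends_le v
        _ ≤ 2 * ((1 + η) * R) := by
            linarith [h.card_filter_adj_le_of_notMem hv k.zero_le,
              h.card_filter_adj_le_of_notMem hv le_rfl]

end IsNearlyRegularLayering

end NearlyRegular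

section SparseEndedPaths

open Finset Filter

theorem eventually_mul_exp_neg_mul_mul_le {C κ η : ℝ} (hκ : 0 < κ) (hη : 0 < η) :
    ∀ᶠ x : ℝ in atTop, C * Real.exp (-(κ * x)) * x ≤ η := by
  have h := (Real.tendsto_pow_mul_exp_neg_atTop_nhds_zero 1).comp (tendsto_id.const_mul_atTop hκ)
  have h' := h.const_mul (C / κ)
  rw [mul_zero] at h'
  filter_upwards [h'.eventually_le_const hη] with x hx
  refine le_of_eq_of_le ?_ hx
  simp only [Function.comp_apply, id, pow_one]
  field_simp

theorem exists_isNearlyRegularLayering {α : Type*} [Fintype α] {G : SimpleGraph α}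
    [DecidableRel G.Adj] {V : Finset α} {k d : ℕ} {η Q : ℝ} (hη₀ : 0 ≤ η) (hη₁ : η ≤ 1)
    (hQ : 0 < Q) (hdeg : ∀ v, #{u | G.Adj v u} ≤ d)
    (hV : ∀ v, |#{u ∈ V | G.Adj v u} - Q| ≤ η / 2 * Q)
    (hsmall : (k + 1) * (2 * Real.exp (-(η ^ 2 / (4 * (k + 1) ^ 2) * Q))) * d ≤ η) :
    ∃ (W : ℕ → Finset α) (B : Finset α), (∀ j, W j ⊆ V) ∧ Pairwise (Function.onFun Disjoint W) ∧
      IsNearlyRegularLayering G W k B d η (Q / (k + 1)) := by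
  obtain ⟨c, B, hB, hc⟩ := exists_coloring_splitsEvenly_off (Fin (k + 1))
    (N := fun v ↦ {u ∈ V | G.Adj v u}) hη₀ hη₁ hQ hV
  simp only [Fintype.card_fin, Nat.cast_add_one] at hB hc
  refine ⟨fun j ↦ {u ∈ V | (c u : ℕ) = j}, B, fun j ↦ filter_subset _ _, fun i j hij ↦ ?_,
    hdeg, ?_, fun v hv j hj ↦ ?_⟩
  · exact disjoint_filter.mpr fun u _ hi hj ↦ hij (hi.symm.trans hj)
  · calc (#B : ℝ) * d
        ≤ Fintype.card α *
            ((k + 1) * (2 * Real.exp (-(η ^ 2 / (4 * (k + 1) ^ 2) * Q)))) * d := by gcongr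
      _ ≤ η * Fintype.card α := by
          rw [mul_assoc, mul_comm η]
          gcongr
  · have h := hc v hv ⟨j, Nat.lt_succ_of_le hj⟩
    simpa only [filter_filter, Fin.ext_iff, and_comm] using h

theorem hasSparseEndedPaths_of_abs_sub_le {α : Type*} [Fintype α] {G : SimpleGraph α}
    [DecidableRel G.Adj] {V : Finset α} {k d t : ℕ} {η Q : ℝ} (hη₀ : 0 ≤ η) (hη₁ : η ≤ 1 / 2)
    (hQ : k + 1 ≤ Q) (hdeg : ∀ v, #{u | G.Adj v u} ≤ d)
    (hV : ∀ v, |#{u ∈ V | G.Adj v u} - Q| ≤ η / 2 * Q)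
    (hsmall : (k + 1) * (2 * Real.exp (-(η ^ 2 / (4 * (k + 1) ^ 2) * Q))) * d ≤ η)
    (ht : t < ((1 - η) ^ 2 * (Q / (k + 1) / d) - (4 * k + 2) * η) * Fintype.card α + 1) :
    HasSparseEndedPaths G V k t (4 * d / (k + 1)) := by
  rcases isEmpty_or_nonempty α with hα | ⟨⟨v₀⟩⟩
  · obtain rfl : t = 0 := by simpa using ht
    exact hasSparseEndedPaths_zero _ _ _ (by positivity)
  have : Nonempty α := ⟨v₀⟩
  have Q_pos : 0 < Q := by linarith [k.cast_nonneg (α := ℝ)]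
  have R_ge_one : 1 ≤ Q / (k + 1) := by rwa [one_le_div (by positivity)]
  have Q_le : (1 - η / 2) * Q ≤ d := by
    have deg_le : (#{u ∈ V | G.Adj v₀ u} : ℝ) ≤ d :=
      Nat.cast_le.mpr ((card_le_card (filter_subset_filter _ V.subset_univ)).trans (hdeg v₀))
    linarith [neg_le_of_abs_le (hV v₀)]
  have d_pos : (0 : ℝ) < d := by nlinarith
  have one_le_d : 1 ≤ d := by exact_mod_cast d_pos
  obtain ⟨W, B, hWV, hdisj, hreg⟩ :=
    exists_isNearlyRegularLayering hη₀ (by linarith) Q_pos hdeg hV hsmall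
  obtain ⟨T, p, hp, hT, hends⟩ :=
    hreg.exists_sparse_isLayeredPathSystem hη₀ (by linarith) R_ge_one one_le_d
  refine hp.hasSparseEndedPaths (hdisj.set_pairwise _) (fun j _ ↦ mod_cast hWV j)
    ?_ fun v ↦ (hends v).trans ?_
  · have card_W_ge : (1 - η) ^ 2 * (Q / (k + 1) / d) * Fintype.card α ≤ #(W 0) := by
      rw [← mul_div_assoc, div_mul_eq_mul_div, div_le_iff₀ d_pos]
      exact hreg.sq_one_sub_mul_le_card_mul (by linarith) (by linarith) one_le_d k.zero_le
    have : (t : ℝ) < #T + 1 := by linarith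
    exact Nat.lt_succ_iff.mp (mod_cast this)
  · have : (1 + η) * Q ≤ 2 * d := by nlinarith
    calc 2 * ((1 + η) * (Q / (k + 1))) = 2 * ((1 + η) * Q) / (k + 1) := by ring
      _ ≤ 4 * d / (k + 1) := div_le_div_of_nonneg_right (by linarith) (by positivity)

theorem ncard_neighborSet_inter_coe {α : Type*} (G : SimpleGraph α) [DecidableRel G.Adj] (v : α)
    (V : Finset α) : (G.neighborSet v ∩ V).ncard = #{u ∈ V | G.Adj v u} := by
  rw [← Set.ncard_coe_finset, coe_filter, Set.inter_comm]
  rfl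

theorem exists_pos_le_half_one_sub_mul_le {ρ ε C : ℝ} (hρ : 0 < ρ) (hε : 0 < ε) (hC : 0 ≤ C) :
    ∃ η, 0 < η ∧ η ≤ 1 / 2 ∧ (1 - ε) * ρ ≤ (1 - η) ^ 2 * ρ - C * η := by
  refine ⟨min (1 / 2) (ε * ρ / (2 * ρ + C)), by positivity, min_le_left _ _, ?_⟩
  set η := min (1 / 2) (ε * ρ / (2 * ρ + C))
  have hη : η * (2 * ρ + C) ≤ ε * ρ := (le_div_iff₀ (by positivity)).mp (min_le_right _ _)
  nlinarith [sq_nonneg η]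

end SparseEndedPaths

-- The bound `t < s + 1` says `t ≤ ⌈s⌉`, without the truncation of `⌈s⌉₊` at negative `s`.
theorem stmt_3_general (m : ℕ) (ε q : ℝ) (hε : 0 < ε) (hq : 0 < q) :
    ∃ γ₀ : ℝ, 0 < γ₀ ∧ ∃ d₀ : ℕ, ∀ d : ℕ, d₀ ≤ d →
      ∀ (Vt : Type*) [Fintype Vt] (G : SimpleGraph Vt), (∀ v, (G.neighborSet v).ncard ≤ d) →
        ∀ V : Set Vt,
          (∀ v, (1 - γ₀) * q * d ≤ ((G.neighborSet v ∩ V).ncard : ℝ) ∧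
            ((G.neighborSet v ∩ V).ncard : ℝ) ≤ (1 + γ₀) * q * d) →
          ∀ t : ℕ, t < (1 - ε) * q * Fintype.card Vt / m + 1 →
            HasSparseEndedPaths G V (m - 1) t (4 * d / m) := by
  obtain _ | k := m
  · exact ⟨1, one_pos, 0, fun d _ Vt _ G _ V _ t ht ↦ by
      obtain rfl : t = 0 := by simpa using ht
      exact hasSparseEndedPaths_zero _ _ _ (by simp)⟩
  obtain ⟨η, η_pos, η_le, hη⟩ :=
    exists_pos_le_half_one_sub_mul_le (ρ := q / (k + 1)) (C := 4 * k + 2) (by positivity) hε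
      (by positivity)
  have hlarge : ∀ᶠ d : ℕ in Filter.atTop, (k + 1 : ℝ) ≤ q * d :=
    (tendsto_natCast_atTop_atTop.const_mul_atTop hq).eventually_ge_atTop _
  have hsmall := (eventually_mul_exp_neg_mul_mul_le (C := (k + 1) * 2)
    (κ := η ^ 2 / (4 * (k + 1) ^ 2) * q) (by positivity) η_pos).natCast_atTop
  obtain ⟨d₀, hd₀⟩ := Filter.eventually_atTop.mp (hlarge.and hsmall)
  refine ⟨η / 2, by positivity, d₀, fun d hd Vt _ G hΔ V hV t ht ↦ ?_⟩
  classical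
  lift V to Finset Vt using V.toFinite
  obtain ⟨hQ, hsmall⟩ := hd₀ d hd
  simp only [ncard_neighborSet_inter_coe] at hV
  have d_pos : (0 : ℝ) < d := by
    by_contra! hd'
    nlinarith [k.cast_nonneg (α := ℝ)]
  rw [Nat.cast_add_one] at ht ⊢
  rw [Nat.add_sub_cancel]
  refine hasSparseEndedPaths_of_abs_sub_le η_pos.le η_le hQ (fun v ↦ ?_) (fun v ↦ ?_)
    (by simpa only [mul_assoc] using hsmall) (ht.trans_le (add_le_add_left ?_ 1))
  · simpa [← ncard_neighborSet_inter_coe] using hΔ v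
  · rw [abs_le]
    constructor <;> linarith [(hV v).1, (hV v).2]
  · calc (1 - ε) * q * Fintype.card Vt / (k + 1)
        = (1 - ε) * (q / (k + 1)) * Fintype.card Vt := by ring
      _ ≤ ((1 - η) ^ 2 * (q / (k + 1)) - (4 * k + 2) * η) * Fintype.card Vt := by gcongr
      _ = _ := by field_simp

/-- Lemma 2.4: covering nearly all of a nearly regular induced subgraph by vertex-disjoint
paths of length `m - 1` whose endvertices form a set of low maximum degree. -/
theorem stmt_3 (m : ℕ) (ε q : ℝ) (hε0 : 0 < ε) (hε : ε ≤ 1) (hq : 1 / 2 ≤ q) :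
    ∃ γ₀ : ℝ, 0 < γ₀ ∧ ∀ γ : ℝ, 0 < γ → γ ≤ γ₀ →
      ∃ d₀ : ℕ, ∀ d : ℕ, d₀ ≤ d →
        ∀ (Vt : Type*) [Fintype Vt] (G : SimpleGraph Vt) (n : ℕ), Fintype.card Vt = n →
          (∀ v : Vt, (G.neighborSet v).ncard ≤ d) →
          ∀ V : Set Vt,
            ((1 - γ) * q * n ≤ (V.ncard : ℝ) ∧ (V.ncard : ℝ) ≤ (1 + γ) * q * n) →
            (∀ v : Vt, (1 - γ) * q * d ≤ ((G.neighborSet v ∩ V).ncard : ℝ) ∧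
              ((G.neighborSet v ∩ V).ncard : ℝ) ≤ (1 + γ) * q * d) →
            ∀ t : ℕ, t = ⌈(1 - ε) * q * n / m⌉₊ →
            ∃ (x y : Fin t → Vt) (P : ∀ i : Fin t, G.Walk (x i) (y i)),
              (∀ i, (P i).IsPath ∧ (P i).length = m - 1 ∧ ∀ w ∈ (P i).support, w ∈ V) ∧
              (∀ i j, i ≠ j → ∀ w : Vt, w ∈ (P i).support → w ∉ (P j).support) ∧
              (∀ v : Vt,
                ((G.neighborSet v ∩ (Set.range x ∪ Set.range y)).ncard : ℝ) ≤ 4 * d / m) := by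
  obtain ⟨γ₀, γ₀_pos, d₀, h⟩ := stmt_3_general m ε q hε0 (by linarith)
  refine ⟨γ₀, γ₀_pos, fun γ _ hγ ↦ ⟨d₀, ?_⟩⟩
  rintro d hd Vt _ G _ rfl hΔ V - hV _ rfl
  have : 0 ≤ 1 - ε := sub_nonneg.mpr hε
  exact h d hd Vt G hΔ V
    (fun v ↦ ⟨le_trans (by gcongr) (hV v).1, (hV v).2.trans (by gcongr)⟩) _
    (Nat.ceil_lt_add_one (by positivity))
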